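/- Let n be an odd positive integer. There exist an open interval I_{π/4} containing π/4 and an open interval I_{3π/4} containing 3π/4 such that for every θ ∈ (I_{π/4} ∪ I_{3π/4}) ∖ {π/4, 3π/4}: the function Φ_n^θ has no critical zero, its nodal set N(Φ_n^θ) is connected, and ℝ² ∖ N(Φ_n^θ) has exactly two connected components (i.e. Φ_n^θ has exactly two nodal domains). -/

import Mathlib

open Polynomial Real Set

/-- Physicists' Hermite polynomials: `H 0 = 1`, `H 1 = 2X`,
`H (n+2) = 2X * H (n+1) - 2(n+1) * H n`. -/
noncomputable def hermiteH : ℕ → Polynomial ℝ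
  | 0 => 1
  | 1 => Polynomial.C 2 * Polynomial.X
  | (n + 2) => Polynomial.C 2 * Polynomial.X * hermiteH (n + 1)
      - Polynomial.C ((2 * (n + 1) : ℕ) : ℝ) * hermiteH n

/-- `z : Fin m → ℝ` enumerates the zeros of `P` in increasing order. -/
def IsZeroEnum (P : Polynomial ℝ) (m : ℕ) (z : Fin m → ℝ) : Prop :=
  StrictMono z ∧ (∀ i, P.eval (z i) = 0) ∧ (∀ x : ℝ, P.eval x = 0 → ∃ i, x = z i)

/-- The eigenfunction `Φ_n^θ`. -/
noncomputable def Phi (n : ℕ) (θ : ℝ) (p : ℝ × ℝ) : ℝ :=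
  (Real.cos θ * (hermiteH n).eval p.1 + Real.sin θ * (hermiteH n).eval p.2) *
    Real.exp (-(p.1 ^ 2 + p.2 ^ 2) / 2)

/-- A critical zero of `u` : a common zero of `u` and its differential. -/
def IsCriticalZero (u : ℝ × ℝ → ℝ) (p : ℝ × ℝ) : Prop :=
  u p = 0 ∧ fderiv ℝ u p = 0

/-- Nodal set of `u`. -/
def nodalSet (u : ℝ × ℝ → ℝ) : Set (ℝ × ℝ) := {p | u p = 0}

/-- The set of nodal domains of `u`, i.e. of connected components of the
complement of the nodal set. -/
def nodalDomains (u : ℝ × ℝ → ℝ) : Set (Set (ℝ × ℝ)) :=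
  {C | ∃ p, u p ≠ 0 ∧ C = connectedComponentIn {q | u q ≠ 0} p}

/-!
Up to a positive factor, `Φ_n^θ` is `a H(x) + b H(y)` with `H = H_n` odd. Symmetries of the plane
bring its nodal set to the form `L H(x) = H(y)`, where `L > 1` is the larger of the ratios
`|a| / |b|` and `|b| / |a|`, close to `1` when `θ` is close to `π/4` or `3π/4`.

The energy `2 n H² + H'²` increases on `[0, ∞)`, so `|H|` increases strictly along the positive
critical points of `H`, and by more than the factor `L` at each step once `L` is close enough to
`1`. A critical zero of `Φ_n^θ` would have critical points of `H` as coordinates, with values in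
ratio `L`, which this growth excludes.

For connectedness, consider the squares `[-c, c]²`, where `c` runs through the positive critical
points. Passing from one square to the next one, `[-d, d]²`, adds four strips, in each of which `H`
is strictly monotone in one of the variables. There the nodal set is a graph, and the region
`L H(x) < H(y)` is bounded by one, over a set of values of the other variable cut out by an
inequality for `H`. That set is an interval, because the level involved exceeds all the previous
oscillations of `H`.
-/

open Filter Topology

/-! ### Preconnected sets in strips and squares -/

theorem isPreconnected_of_injOn_image {X Y : Type*} [TopologicalSpace X] [TopologicalSpace Y]
    [T2Space Y] {K : Set X} {f : X → Y} (hK : IsCompact K) (hf : ContinuousOn f K)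
    (hinj : InjOn f K) (h : IsPreconnected (f '' K)) : IsPreconnected K := by
  have : CompactSpace K := isCompact_iff_compactSpace.mp hK
  have hemb := hf.domRestrict.isClosedEmbedding hinj.injective
  rw [isPreconnected_iff_preconnectedSpace, preconnectedSpace_iff_univ,
    ← hemb.isInducing.isPreconnected_image, image_univ, range_domRestrict]
  exact h

theorem isPreconnected_neg {G : Type*} [TopologicalSpace G] [InvolutiveNeg G] [ContinuousNeg G]
    {S : Set G} : IsPreconnected (-S) ↔ IsPreconnected S :=
  (Homeomorph.neg G).isPreconnected_preimage

theorem isPreconnected_of_spine {X : Type*} [TopologicalSpace X] {S : Set (X × ℝ)} (b : ℝ)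
    (hspine : IsPreconnected {x | (x, b) ∈ S})
    (hseg : ∀ p ∈ S, ∀ t ∈ uIcc p.2 b, (p.1, t) ∈ S) : IsPreconnected S := by
  rcases S.eq_empty_or_nonempty with rfl | ⟨p₀, hp₀⟩
  · exact isPreconnected_empty
  have hfoot : ∀ p ∈ S, (p.1, b) ∈ S := fun p hp => hseg p hp b right_mem_uIcc
  refine isPreconnected_of_forall (p₀.1, b) fun p hp =>
    ⟨(fun t => (p.1, t)) '' uIcc p.2 b ∪ (fun x => (x, b)) '' {x | (x, b) ∈ S}, ?_,
      Or.inr ⟨p₀.1, hfoot p₀ hp₀, rfl⟩, Or.inl ⟨p.2, left_mem_uIcc, rfl⟩, ?_⟩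
  · rintro q (⟨t, ht, rfl⟩ | ⟨x, hx, rfl⟩)
    exacts [hseg p hp t ht, hx]
  · exact IsPreconnected.union (p.1, b) ⟨b, right_mem_uIcc, rfl⟩ ⟨p.1, hfoot p hp, rfl⟩
      (isPreconnected_uIcc.image _ (by fun_prop)) (hspine.image _ (by fun_prop))

section MonotoneStrips

variable {X : Type*} [TopologicalSpace X] {A : Set X} {φ : X → ℝ} {ψ : ℝ → ℝ} {a b : ℝ}

theorem isPreconnected_eq_of_strictMonoOn [T2Space X] (hA : IsCompact A) (hφ : Continuous φ)
    (hψ : Continuous ψ) (hab : a ≤ b) (hmono : StrictMonoOn ψ (Icc a b))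
    (hbase : IsPreconnected {x ∈ A | φ x ∈ Icc (ψ a) (ψ b)}) :
    IsPreconnected ({p : X × ℝ | φ p.1 = ψ p.2} ∩ A ×ˢ Icc a b) := by
  have hclosed : IsClosed {p : X × ℝ | φ p.1 = ψ p.2} := isClosed_eq (by fun_prop) (by fun_prop)
  refine isPreconnected_of_injOn_image ((hA.prod isCompact_Icc).inter_left hclosed)
    continuous_fst.continuousOn ?_ ?_
  · rintro ⟨x, y⟩ ⟨hp, -, hy⟩ ⟨x', y'⟩ ⟨hp', -, hy'⟩ (rfl : x = x')
    exact Prod.ext rfl (hmono.injOn hy hy' (hp.symm.trans hp'))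
  · convert hbase
    ext x
    constructor
    · rintro ⟨⟨x, y⟩, ⟨hp, hx, hy⟩, rfl⟩
      refine ⟨hx, ?_⟩
      rw [show φ x = ψ y from hp]
      exact ⟨hmono.monotoneOn (left_mem_Icc.2 hab) hy hy.1,
        hmono.monotoneOn hy (right_mem_Icc.2 hab) hy.2⟩
    · rintro ⟨hx, hφx⟩
      obtain ⟨y, hy, hyx⟩ := intermediate_value_Icc hab hψ.continuousOn hφx
      exact ⟨(x, y), ⟨hyx.symm, hx, hy⟩, rfl⟩

theorem isPreconnected_lt_of_monotoneOn (hab : a ≤ b) (hmono : MonotoneOn ψ (Icc a b))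
    (hbase : IsPreconnected {x ∈ A | φ x < ψ b}) :
    IsPreconnected ({p : X × ℝ | φ p.1 < ψ p.2} ∩ A ×ˢ Icc a b) := by
  refine isPreconnected_of_spine b ?_ ?_
  · convert hbase using 3 with x
    simp [hab, and_comm]
  · rintro ⟨x, y⟩ ⟨hp, hx, hy⟩ t ht
    rw [uIcc_of_le hy.2] at ht
    have ht' : t ∈ Icc a b := ⟨hy.1.trans ht.1, ht.2⟩
    exact ⟨hp.trans_le (hmono hy ht' ht.1), hx, ht'⟩

theorem isPreconnected_gt_of_monotoneOn (hab : a ≤ b) (hmono : MonotoneOn ψ (Icc a b))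
    (hbase : IsPreconnected {x ∈ A | ψ a < φ x}) :
    IsPreconnected ({p : X × ℝ | ψ p.2 < φ p.1} ∩ A ×ˢ Icc a b) := by
  refine isPreconnected_of_spine a ?_ ?_
  · convert hbase using 3 with x
    simp [hab, and_comm]
  · rintro ⟨x, y⟩ ⟨hp, hx, hy⟩ t ht
    rw [uIcc_of_ge hy.1] at ht
    have ht' : t ∈ Icc a b := ⟨ht.1, ht.2.trans hy.2⟩
    exact ⟨(hmono ht' hy ht.2).trans_lt hp, hx, ht'⟩

end MonotoneStrips

/-- The centred square `[-r, r]²`. -/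
def square (r : ℝ) : Set (ℝ × ℝ) := Icc (-r) r ×ˢ Icc (-r) r

theorem isPreconnected_inter_square {S : Set (ℝ × ℝ)} {c d : ℝ} (hc : 0 ≤ c) (hcd : c ≤ d)
    (hsquare : IsPreconnected (S ∩ square c))
    (htop : IsPreconnected (S ∩ Icc (-c) c ×ˢ Icc c d))
    (hbottom : IsPreconnected (S ∩ Icc (-c) c ×ˢ Icc (-d) (-c)))
    (hleft : IsPreconnected (S ∩ Icc (-d) (-c) ×ˢ Icc (-d) d))
    (hright : IsPreconnected (S ∩ Icc c d ×ˢ Icc (-d) d))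
    (htop_nonempty : ∃ x ∈ Icc (-c) c, (x, c) ∈ S)
    (hbottom_nonempty : ∃ x ∈ Icc (-c) c, (x, -c) ∈ S)
    (hleft_nonempty : ∃ y ∈ Icc (-d) d, (-c, y) ∈ S)
    (hright_nonempty : ∃ y ∈ Icc (-d) d, (c, y) ∈ S) :
    IsPreconnected (S ∩ square d) := by
  obtain ⟨x₁, hx₁, h₁⟩ := htop_nonempty
  obtain ⟨x₂, hx₂, h₂⟩ := hbottom_nonempty
  obtain ⟨y₁, hy₁, h₃⟩ := hleft_nonempty
  obtain ⟨y₂, hy₂, h₄⟩ := hright_nonempty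
  have hcc : -c ≤ c := by linarith
  have hdc : -d ≤ -c := neg_le_neg hcd
  have hsplit : Icc (-d) d = Icc (-d) (-c) ∪ Icc (-c) c ∪ Icc c d := by
    rw [Icc_union_Icc_eq_Icc hdc hcc, Icc_union_Icc_eq_Icc (hdc.trans hcc) hcd]
  have hmiddle : IsPreconnected (S ∩ Icc (-c) c ×ˢ Icc (-d) d) := by
    have hlower : IsPreconnected (S ∩ Icc (-c) c ×ˢ Icc (-d) (-c) ∪ S ∩ square c) :=
      hbottom.union' ⟨(x₂, -c), ⟨h₂, hx₂, hdc, le_rfl⟩, h₂, hx₂, le_rfl, hcc⟩ hsquare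
    have hall := hlower.union' (t := S ∩ Icc (-c) c ×ˢ Icc c d)
      ⟨(x₁, c), Or.inr ⟨h₁, hx₁, hcc, le_rfl⟩, h₁, hx₁, le_rfl, hcd⟩ htop
    rwa [square, ← inter_union_distrib_left, ← inter_union_distrib_left, ← prod_union,
      ← prod_union, ← hsplit] at hall
  have hlower : IsPreconnected (S ∩ Icc (-d) (-c) ×ˢ Icc (-d) d ∪ S ∩ Icc (-c) c ×ˢ Icc (-d) d) :=
    hleft.union' ⟨(-c, y₁), ⟨h₃, ⟨hdc, le_rfl⟩, hy₁⟩, h₃, ⟨le_rfl, hcc⟩, hy₁⟩ hmiddle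
  have hall := hlower.union' (t := S ∩ Icc c d ×ˢ Icc (-d) d)
    ⟨(c, y₂), Or.inr ⟨h₄, ⟨hcc, le_rfl⟩, hy₂⟩, h₄, ⟨le_rfl, hcd⟩, hy₂⟩ hright
  rwa [← inter_union_distrib_left, ← inter_union_distrib_left, ← union_prod, ← union_prod,
    ← hsplit] at hall

theorem isPreconnected_of_squares {S : Set (ℝ × ℝ)} {M : ℝ}
    (h : ∀ d ≥ M, IsPreconnected (S ∩ square d)) : IsPreconnected S := by
  refine isPreconnected_of_forall_pair fun p hp q hq => ?_
  have hnorm : ∀ {v : ℝ × ℝ} {d : ℝ}, ‖v‖ ≤ d → v ∈ square d := fun hv =>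
    ⟨abs_le.1 ((norm_fst_le _).trans hv), abs_le.1 ((norm_snd_le _).trans hv)⟩
  exact ⟨S ∩ square (max M (max ‖p‖ ‖q‖)), inter_subset_left, ⟨hp, hnorm (by simp)⟩,
    ⟨hq, hnorm (by simp)⟩, h _ (le_max_left _ _)⟩

/-! ### Level sets on growing squares -/

/-- The level curve `L g(x) = g(y)`. -/
def levelCurve (g : ℝ → ℝ) (L : ℝ) : Set (ℝ × ℝ) := {p | L * g p.1 = g p.2}

/-- The region `L g(x) < g(y)` on one side of `levelCurve g L`. -/
def levelAbove (g : ℝ → ℝ) (L : ℝ) : Set (ℝ × ℝ) := {p | L * g p.1 < g p.2}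

/-- The level curve and the region above it are both preconnected inside `[-r, r]²`; this is the
property propagated from small to large squares. -/
def SquareConnected (g : ℝ → ℝ) (L r : ℝ) : Prop :=
  IsPreconnected (levelCurve g L ∩ square r) ∧ IsPreconnected (levelAbove g L ∩ square r)

section LevelSets

variable {g : ℝ → ℝ} {L a b r : ℝ} {I : Set ℝ}

theorem isPreconnected_levelCurve_row (hg : Continuous g) (hI : IsCompact I) (hab : a ≤ b)
    (hmono : StrictMonoOn g (Icc a b))
    (hbase : IsPreconnected {x ∈ I | L * g x ∈ Icc (g a) (g b)}) :
    IsPreconnected (levelCurve g L ∩ I ×ˢ Icc a b) :=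
  isPreconnected_eq_of_strictMonoOn hI (by fun_prop) hg hab hmono hbase

theorem isPreconnected_levelCurve_column (hg : Continuous g) (hL : 0 < L) (hI : IsCompact I)
    (hab : a ≤ b) (hmono : StrictMonoOn g (Icc a b))
    (hbase : IsPreconnected {y ∈ I | g y ∈ Icc (L * g a) (L * g b)}) :
    IsPreconnected (levelCurve g L ∩ Icc a b ×ˢ I) := by
  have hrow := isPreconnected_eq_of_strictMonoOn (ψ := fun x => L * g x) hI hg (by fun_prop) hab
    (fun _ hx _ hy hxy => mul_lt_mul_of_pos_left (hmono hx hy hxy) hL) hbase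
  convert (Homeomorph.prodComm ℝ ℝ).isPreconnected_preimage.2 hrow using 1
  ext p
  simp [levelCurve, eq_comm]

theorem isPreconnected_levelAbove_row (hab : a ≤ b) (hmono : MonotoneOn g (Icc a b))
    (hbase : IsPreconnected {x ∈ I | L * g x < g b}) :
    IsPreconnected (levelAbove g L ∩ I ×ˢ Icc a b) :=
  isPreconnected_lt_of_monotoneOn (φ := fun x => L * g x) hab hmono hbase

theorem isPreconnected_levelAbove_column (hL : 0 ≤ L) (hab : a ≤ b)
    (hmono : MonotoneOn g (Icc a b)) (hbase : IsPreconnected {y ∈ I | L * g a < g y}) :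
    IsPreconnected (levelAbove g L ∩ Icc a b ×ˢ I) := by
  have hrow := isPreconnected_gt_of_monotoneOn (ψ := fun x => L * g x) hab
    (fun _ hx _ hy hxy => mul_le_mul_of_nonneg_left (hmono hx hy hxy) hL) hbase
  convert (Homeomorph.prodComm ℝ ℝ).isPreconnected_preimage.2 hrow using 1
  ext p
  simp [levelAbove]

theorem neg_levelCurve (hodd : Function.Odd g) : -levelCurve g L = levelCurve g L := by
  ext p
  simp [levelCurve, hodd _]

theorem levelCurve_neg : levelCurve (-g) L = levelCurve g L := by
  ext p
  simp [levelCurve]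

theorem levelAbove_neg (hodd : Function.Odd g) : levelAbove (-g) L = -levelAbove g L := by
  ext p
  simp [levelAbove, hodd _]

theorem neg_square : -square r = square r := by
  simp [square]

theorem SquareConnected.of_neg (hodd : Function.Odd g) (h : SquareConnected (-g) L r) :
    SquareConnected g L r := by
  rwa [SquareConnected, levelCurve_neg, levelAbove_neg hodd, ← neg_square, ← inter_neg,
    isPreconnected_neg, neg_square] at h

end LevelSets

theorem strictMonoOn_Icc_neg_of_odd {f : ℝ → ℝ} {a b : ℝ} (hodd : Function.Odd f)
    (h : StrictMonoOn f (Icc a b)) : StrictMonoOn f (Icc (-b) (-a)) := fun x hx y hy hxy => by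
  have := h ⟨le_neg.1 hy.2, neg_le.1 hy.1⟩ ⟨le_neg.1 hx.2, neg_le.1 hx.1⟩ (neg_lt_neg hxy)
  simpa [hodd _] using this

/-- On `[-d, d]`, the function `f` is nondecreasing once it is truncated below at level `m`: its
oscillations of height less than `m` are ignored. -/
def MonotoneAbove (f : ℝ → ℝ) (m d : ℝ) : Prop :=
  MonotoneOn (fun x => max (f x) m) (Icc (-d) d)

namespace MonotoneAbove

variable {f : ℝ → ℝ} {m c d t : ℝ}

theorem of_strictMonoOn (h : StrictMonoOn f (Icc (-d) d)) : MonotoneAbove f m d :=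
  h.monotoneOn.max monotoneOn_const

theorem convex_le (h : MonotoneAbove f m d) (ht : m ≤ t) :
    Convex ℝ {x ∈ Icc (-d) d | f x ≤ t} := by
  simpa [ht] using MonotoneOn.convex_le h (convex_Icc (-d) d) t

theorem convex_lt (h : MonotoneAbove f m d) (ht : m < t) :
    Convex ℝ {x ∈ Icc (-d) d | f x < t} := by
  simpa [ht] using MonotoneOn.convex_lt h (convex_Icc (-d) d) t

theorem convex_neg_le (h : MonotoneAbove f m d) (hodd : Function.Odd f) (ht : m ≤ t) :
    Convex ℝ {x ∈ Icc (-d) d | -t ≤ f x} := by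
  have hreflect : {x ∈ Icc (-d) d | -t ≤ f x} = -{x ∈ Icc (-d) d | f x ≤ t} := by
    ext x
    simp [hodd x, neg_le, and_comm]
  exact hreflect ▸ (h.convex_le ht).neg

theorem convex_neg_lt (h : MonotoneAbove f m d) (hodd : Function.Odd f) (ht : m < t) :
    Convex ℝ {x ∈ Icc (-d) d | -t < f x} := by
  have hreflect : {x ∈ Icc (-d) d | -t < f x} = -{x ∈ Icc (-d) d | f x < t} := by
    ext x
    simp [hodd x, neg_le, neg_lt, and_comm]
  exact hreflect ▸ (h.convex_lt ht).neg

theorem abs_apply_le (h : MonotoneAbove f m d) (hodd : Function.Odd f) (hm : m ≤ f d) {x : ℝ}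
    (hx : x ∈ Icc (-d) d) : |f x| ≤ f d := by
  have hle : ∀ y ∈ Icc (-d) d, f y ≤ f d := fun y hy =>
    (le_max_left _ _).trans ((h hy ⟨hy.1.trans hy.2, le_rfl⟩ hy.2).trans_eq (max_eq_left hm))
  refine abs_le'.2 ⟨hle x hx, ?_⟩
  rw [← hodd]
  exact hle (-x) ⟨neg_le_neg hx.2, neg_le.1 hx.1⟩

theorem extend (h : MonotoneAbove (-f) m c) (hodd : Function.Odd f) (hc : 0 ≤ c) (hcd : c ≤ d)
    (hm : m ≤ -f c) (hmono : MonotoneOn f (Icc c d)) : MonotoneAbove f (-f c) d := by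
  have hconst : ∀ x ∈ Icc (-d) c, f x ≤ -f c := by
    intro x hx
    rcases le_total x (-c) with hxc | hxc
    · have := hmono ⟨le_rfl, hcd⟩ ⟨le_neg.1 hxc, neg_le.1 hx.1⟩ (le_neg.1 hxc)
      rw [hodd] at this
      exact le_neg.1 this
    · have hodd' : Function.Odd (-f) := fun y => congrArg Neg.neg (hodd y)
      have := h.abs_apply_le hodd' hm ⟨hxc, hx.2⟩
      rw [Pi.neg_apply, abs_neg] at this
      exact (le_abs_self _).trans this
  have hleft : MonotoneOn (fun x => max (f x) (-f c)) (Icc (-d) c) := fun x hx y hy _ => by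
    simp only [max_eq_right (hconst x hx), max_eq_right (hconst y hy), le_rfl]
  have hright : MonotoneOn (fun x => max (f x) (-f c)) (Icc c d) := hmono.max monotoneOn_const
  have hdc : -d ≤ c := by linarith
  rw [MonotoneAbove, ← Icc_union_Icc_eq_Icc hdc hcd]
  exact hleft.union_right hright (isGreatest_Icc hdc) (isLeast_Icc hcd)

end MonotoneAbove

theorem SquareConnected.of_strictMonoOn {g : ℝ → ℝ} {L d : ℝ} (hodd : Function.Odd g)
    (hg : Continuous g) (hL : 1 ≤ L) (hd : 0 ≤ d) (hmono : StrictMonoOn g (Icc (-d) d)) :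
    SquareConnected g L d := by
  have hdd : -d ≤ d := neg_le_self hd
  have hgd : 0 ≤ g d := hodd.map_zero ▸ hmono.monotoneOn ⟨neg_nonpos.2 hd, hd⟩ ⟨hdd, le_rfl⟩ hd
  have hLg : g d ≤ L * g d := le_mul_of_one_le_left hgd hL
  have habs : ∀ x ∈ Icc (-d) d, |g x| ≤ g d := fun x =>
    (MonotoneAbove.of_strictMonoOn hmono).abs_apply_le hodd hgd
  have hL₀ : 0 < L := zero_lt_one.trans_le hL
  constructor
  · refine isPreconnected_levelCurve_column hg hL₀ isCompact_Icc hdd hmono ?_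
    have hall : ∀ y ∈ Icc (-d) d, g y ∈ Icc (L * g (-d)) (L * g d) := fun y hy => by
      rw [hodd]
      constructor <;> linarith [abs_le.1 (habs y hy)]
    rw [sep_eq_self_iff_mem_true.2 hall]
    exact isPreconnected_Icc
  · refine isPreconnected_levelAbove_row hdd hmono.monotoneOn ?_
    have hLmono : MonotoneOn (fun x => L * g x) (Icc (-d) d) := fun _ hx _ hy hxy =>
      mul_le_mul_of_nonneg_left (hmono.monotoneOn hx hy hxy) hL₀.le
    exact (hLmono.convex_lt (convex_Icc _ _) _).isPreconnected

/-- The data propagating connectedness from `[-c, c]²` to `[-d, d]²`: `c` is a turning point of the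
odd function `g`, with `g c` negative and much larger in size than the earlier oscillations, which
have height at most `m`; from `c` to `d` the function `g` climbs to a value much larger
than `|g c|`. "Much larger" means by more than the factor `L`. -/
structure IsGrowthStep (g : ℝ → ℝ) (L m c d : ℝ) : Prop where
  odd : Function.Odd g
  continuous : Continuous g
  one_lt : 1 < L
  left_nonneg : 0 ≤ c
  lt : c < d
  level_nonneg : 0 ≤ m
  mul_lt_left : L * m < -g c
  monotoneAbove_neg : MonotoneAbove (-g) m c
  strictMonoOn : StrictMonoOn g (Icc c d)
  mul_lt_right : L * -g c < g d

namespace IsGrowthStep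

variable {g : ℝ → ℝ} {L m c d : ℝ} (h : IsGrowthStep g L m c d)
include h

theorem odd_neg : Function.Odd (-g) := fun x => congrArg Neg.neg (h.odd x)

theorem apply_left_neg : g c < 0 := by
  have := mul_nonneg (zero_le_one.trans h.one_lt.le) h.level_nonneg
  linarith [h.mul_lt_left]

theorem neg_apply_left_lt_mul : -g c < L * -g c :=
  lt_mul_of_one_lt_left (neg_pos.2 h.apply_left_neg) h.one_lt

theorem le_neg_apply_left : m ≤ -g c :=
  (le_mul_of_one_le_left h.level_nonneg h.one_lt.le).trans h.mul_lt_left.le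

theorem lt_neg_apply_left_div : m < -g c / L :=
  (lt_div_iff₀' (zero_lt_one.trans h.one_lt)).2 h.mul_lt_left

theorem monotoneAbove : MonotoneAbove g (-g c) d :=
  h.monotoneAbove_neg.extend h.odd h.left_nonneg h.lt.le h.le_neg_apply_left
    h.strictMonoOn.monotoneOn

theorem abs_le_right {x : ℝ} (hx : x ∈ Icc (-d) d) : |g x| ≤ g d :=
  h.monotoneAbove.abs_apply_le h.odd (h.neg_apply_left_lt_mul.trans h.mul_lt_right).le hx

theorem abs_le_left {x : ℝ} (hx : x ∈ Icc (-c) c) : |g x| ≤ -g c := by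
  simpa using h.monotoneAbove_neg.abs_apply_le h.odd_neg h.le_neg_apply_left hx

theorem strictMonoOn_neg : StrictMonoOn g (Icc (-d) (-c)) :=
  strictMonoOn_Icc_neg_of_odd h.odd h.strictMonoOn

theorem right_lt_mul : g d < L * g d :=
  lt_mul_of_one_lt_left ((neg_pos.2 h.apply_left_neg).trans
    (h.neg_apply_left_lt_mul.trans h.mul_lt_right)) h.one_lt

theorem levelCurve_top : IsPreconnected (levelCurve g L ∩ Icc (-c) c ×ˢ Icc c d) := by
  refine isPreconnected_levelCurve_row h.continuous isCompact_Icc h.lt.le h.strictMonoOn ?_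
  convert (h.monotoneAbove_neg.convex_le h.lt_neg_apply_left_div.le).isPreconnected using 1
  ext x
  refine and_congr_right fun hx => ?_
  have hL := zero_lt_one.trans h.one_lt
  have hupper : L * g x ≤ g d :=
    (mul_le_mul_of_nonneg_left ((le_abs_self _).trans (h.abs_le_left hx)) hL.le).trans
      h.mul_lt_right.le
  rw [Pi.neg_apply, le_div_iff₀' hL, mul_neg, neg_le_neg_iff]
  exact and_iff_left hupper

theorem levelCurve_right : IsPreconnected (levelCurve g L ∩ Icc c d ×ˢ Icc (-d) d) := by
  refine isPreconnected_levelCurve_column h.continuous (zero_lt_one.trans h.one_lt) isCompact_Icc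
    h.lt.le h.strictMonoOn ?_
  convert (h.monotoneAbove.convex_neg_le h.odd h.neg_apply_left_lt_mul.le).isPreconnected using 1
  ext y
  refine and_congr_right fun hy => ?_
  rw [mul_neg, neg_neg]
  exact and_iff_left (((le_abs_self _).trans (h.abs_le_right hy)).trans h.right_lt_mul.le)

theorem levelCurve_bottom : IsPreconnected (levelCurve g L ∩ Icc (-c) c ×ˢ Icc (-d) (-c)) := by
  simpa [neg_levelCurve h.odd] using isPreconnected_neg.2 h.levelCurve_top

theorem levelCurve_left : IsPreconnected (levelCurve g L ∩ Icc (-d) (-c) ×ˢ Icc (-d) d) := by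
  simpa [neg_levelCurve h.odd] using isPreconnected_neg.2 h.levelCurve_right

theorem exists_top_mem_levelCurve : ∃ x ∈ Icc (-c) c, (x, c) ∈ levelCurve g L := by
  have hL := zero_lt_one.trans h.one_lt
  have hvalue : g c / L ∈ Icc (g c) (g (-c)) := by
    rw [h.odd]
    refine ⟨(le_div_iff₀' hL).2 ?_, (div_neg_of_neg_of_pos h.apply_left_neg hL).le.trans
      (neg_pos.2 h.apply_left_neg).le⟩
    linarith [h.neg_apply_left_lt_mul]
  obtain ⟨x, hx, hgx⟩ := intermediate_value_Icc' (neg_le_self h.left_nonneg)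
    h.continuous.continuousOn hvalue
  exact ⟨x, hx, by rw [levelCurve, mem_ofPred_eq, hgx, mul_div_cancel₀ _ hL.ne']⟩

theorem exists_right_mem_levelCurve : ∃ y ∈ Icc (-d) d, (c, y) ∈ levelCurve g L := by
  have hvalue : L * g c ∈ Icc (g (-d)) (g d) := by
    rw [h.odd]
    constructor <;> linarith [h.neg_apply_left_lt_mul, h.apply_left_neg, h.mul_lt_right]
  obtain ⟨y, hy, hgy⟩ := intermediate_value_Icc (neg_le_self (h.left_nonneg.trans h.lt.le))
    h.continuous.continuousOn hvalue
  exact ⟨y, hy, hgy.symm⟩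

theorem isPreconnected_levelCurve (hc : IsPreconnected (levelCurve g L ∩ square c)) :
    IsPreconnected (levelCurve g L ∩ square d) := by
  have hneg : ∀ p ∈ levelCurve g L, -p ∈ levelCurve g L := fun p hp => by
    rwa [← Set.mem_neg, neg_levelCurve h.odd]
  obtain ⟨x, hx, hxc⟩ := h.exists_top_mem_levelCurve
  obtain ⟨y, hy, hcy⟩ := h.exists_right_mem_levelCurve
  exact isPreconnected_inter_square h.left_nonneg h.lt.le hc h.levelCurve_top h.levelCurve_bottom
    h.levelCurve_left h.levelCurve_right ⟨x, hx, hxc⟩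
    ⟨-x, ⟨neg_le_neg hx.2, neg_le.1 hx.1⟩, hneg _ hxc⟩
    ⟨-y, ⟨neg_le_neg hy.2, neg_le.1 hy.1⟩, hneg _ hcy⟩ ⟨y, hy, hcy⟩

theorem levelAbove_top : IsPreconnected (levelAbove g L ∩ Icc (-c) c ×ˢ Icc c d) := by
  refine isPreconnected_levelAbove_row h.lt.le h.strictMonoOn.monotoneOn ?_
  have hall : ∀ x ∈ Icc (-c) c, L * g x < g d := fun x hx =>
    (mul_le_mul_of_nonneg_left ((le_abs_self _).trans (h.abs_le_left hx))
      (zero_le_one.trans h.one_lt.le)).trans_lt h.mul_lt_right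
  rw [sep_eq_self_iff_mem_true.2 hall]
  exact isPreconnected_Icc

theorem levelAbove_bottom : IsPreconnected (levelAbove g L ∩ Icc (-c) c ×ˢ Icc (-d) (-c)) := by
  refine isPreconnected_levelAbove_row (neg_le_neg h.lt.le) h.strictMonoOn_neg.monotoneOn ?_
  convert (h.monotoneAbove_neg.convex_neg_lt h.odd_neg h.lt_neg_apply_left_div).isPreconnected
    using 3 with x
  rw [Pi.neg_apply, neg_lt_neg_iff, lt_div_iff₀' (zero_lt_one.trans h.one_lt), h.odd]

theorem levelAbove_left : IsPreconnected (levelAbove g L ∩ Icc (-d) (-c) ×ˢ Icc (-d) d) := by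
  refine isPreconnected_levelAbove_column (zero_le_one.trans h.one_lt.le) (neg_le_neg h.lt.le)
    h.strictMonoOn_neg.monotoneOn ?_
  have hall : ∀ y ∈ Icc (-d) d, L * g (-d) < g y := fun y hy => by
    rw [h.odd]
    linarith [h.right_lt_mul, (abs_le.1 (h.abs_le_right hy)).1]
  rw [sep_eq_self_iff_mem_true.2 hall]
  exact isPreconnected_Icc

theorem levelAbove_right : IsPreconnected (levelAbove g L ∩ Icc c d ×ˢ Icc (-d) d) := by
  refine isPreconnected_levelAbove_column (zero_le_one.trans h.one_lt.le) h.lt.le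
    h.strictMonoOn.monotoneOn ?_
  simpa using (h.monotoneAbove.convex_neg_lt h.odd h.neg_apply_left_lt_mul).isPreconnected

theorem isPreconnected_levelAbove (hc : IsPreconnected (levelAbove g L ∩ square c)) :
    IsPreconnected (levelAbove g L ∩ square d) := by
  have hcc := neg_le_self h.left_nonneg
  have hdiag : (c, c) ∈ levelAbove g L :=
    show L * g c < g c by linarith [h.neg_apply_left_lt_mul]
  have hbottom : (c, -c) ∈ levelAbove g L := by
    rw [levelAbove, mem_ofPred_eq, h.odd]
    linarith [h.neg_apply_left_lt_mul, h.apply_left_neg]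
  have hleft : (-c, d) ∈ levelAbove g L := by
    rw [levelAbove, mem_ofPred_eq, h.odd]
    exact h.mul_lt_right
  exact isPreconnected_inter_square h.left_nonneg h.lt.le hc h.levelAbove_top h.levelAbove_bottom
    h.levelAbove_left h.levelAbove_right ⟨c, ⟨hcc, le_rfl⟩, hdiag⟩ ⟨c, ⟨hcc, le_rfl⟩, hbottom⟩
    ⟨d, ⟨neg_le_self (h.left_nonneg.trans h.lt.le), le_rfl⟩, hleft⟩
    ⟨c, ⟨(neg_le_neg h.lt.le).trans hcc, h.lt.le⟩, hdiag⟩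

theorem squareConnected (hc : SquareConnected g L c) : SquareConnected g L d :=
  ⟨h.isPreconnected_levelCurve hc.1, h.isPreconnected_levelAbove hc.2⟩

end IsGrowthStep

/-! ### Functions with growing turning points -/

/-- `K` is the set of positive turning points of the odd continuous function `g`: on `[0, ∞)` the
function is strictly monotone between them, and at each of them it has a positive local maximum
or a negative local minimum. -/
structure HasTurningPoints (g : ℝ → ℝ) (K : Finset ℝ) : Prop where
  odd : Function.Odd g
  continuous : Continuous g
  pos : ∀ c ∈ K, 0 < c
  strict : ∀ a b, 0 ≤ a → (∀ c ∈ K, c ∉ Ioo a b) →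
    StrictMonoOn g (Icc a b) ∨ StrictAntiOn g (Icc a b)
  extremum : ∀ c ∈ K, 0 < g c ∧ IsLocalMax g c ∨ g c < 0 ∧ IsLocalMin g c

/-- From each point of `K` to any later one, `|g|` grows by more than the factor `L`. -/
def GrowsBy (g : ℝ → ℝ) (K : Finset ℝ) (L : ℝ) : Prop :=
  ∀ c ∈ K, ∀ c' ∈ K, c < c' → L * |g c| < |g c'|

namespace HasTurningPoints

variable {g : ℝ → ℝ} {K : Finset ℝ} {L c d : ℝ}

protected theorem neg (h : HasTurningPoints g K) : HasTurningPoints (-g) K where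
  odd x := congrArg Neg.neg (h.odd x)
  continuous := h.continuous.neg
  pos := h.pos
  strict a b ha hK := (h.strict a b ha hK).symm.imp (fun hg => hg.neg) (fun hg => hg.neg)
  extremum c hc := (h.extremum c hc).symm.imp (fun hg => ⟨neg_pos.2 hg.1, hg.2.neg⟩)
    (fun hg => ⟨neg_neg_iff_pos.2 hg.1, hg.2.neg⟩)

theorem strictMonoOn_of_forall_ge (h : HasTurningPoints g K) (hd : 0 < d) (hgd : 0 < g d)
    (hK : ∀ c ∈ K, d ≤ c) : StrictMonoOn g (Icc (-d) d) := by
  have hright : StrictMonoOn g (Icc 0 d) := by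
    refine (h.strict 0 d le_rfl fun c hc hcd =>
      (hK c hc).not_gt hcd.2).resolve_right fun hanti => ?_
    have := hanti ⟨le_rfl, hd.le⟩ ⟨hd.le, le_rfl⟩ hd
    rw [h.odd.map_zero] at this
    exact hgd.not_gt this
  have hleft := strictMonoOn_Icc_neg_of_odd h.odd hright
  rw [neg_zero] at hleft
  rw [← Icc_union_Icc_eq_Icc (neg_nonpos.2 hd.le) hd.le]
  exact hleft.union hright (isGreatest_Icc (neg_nonpos.2 hd.le)) (isLeast_Icc hd.le)

theorem strictMonoOn_and_neg_of_last (h : HasTurningPoints g K) (hc : c ∈ K) (hcd : c < d)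
    (hK : ∀ c' ∈ K, c' < d → c' ≤ c) (hgrow : |g c| < g d) :
    StrictMonoOn g (Icc c d) ∧ g c < 0 := by
  have hmono : StrictMonoOn g (Icc c d) := by
    refine (h.strict c d (h.pos c hc).le fun c' hc' hcd' =>
      (hK c' hc' hcd'.2).not_gt hcd'.1).resolve_right fun hanti => ?_
    have := hanti ⟨le_rfl, hcd.le⟩ ⟨hcd.le, le_rfl⟩ hcd
    exact (le_abs_self (g c)).not_gt (hgrow.trans this)
  refine ⟨hmono, ?_⟩
  rcases h.extremum c hc with ⟨-, hmax⟩ | ⟨hneg, -⟩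
  · obtain ⟨x, hx, hgx⟩ := ((hmax.filter_mono nhdsWithin_le_nhds).and
      (Ioc_mem_nhdsGT hcd)).exists
    exact absurd (hmono ⟨le_rfl, hcd.le⟩ ⟨hgx.1.le, hgx.2⟩ hgx.1) hx.not_gt
  · exact hneg

theorem exists_monotoneAbove_and_squareConnected (h : HasTurningPoints g K) (hgrow : GrowsBy g K L)
    (hL : 1 < L) (hd : 0 < d) (hgd : 0 < g d) (hlast : ∀ c ∈ K, c < d → L * |g c| < g d) :
    (∃ m ≥ 0, L * m < g d ∧ MonotoneAbove g m d) ∧ SquareConnected g L d := by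
  induction hs : {c ∈ K | c < d} using Finset.strongInduction generalizing g d with
  | H s ih =>
    rcases s.eq_empty_or_nonempty with rfl | hne
    · have hK : ∀ c ∈ K, d ≤ c := by simpa [Finset.filter_eq_empty_iff] using hs
      have hmono := h.strictMonoOn_of_forall_ge hd hgd hK
      exact ⟨⟨0, le_rfl, by simpa using hgd, .of_strictMonoOn hmono⟩,
        .of_strictMonoOn h.odd h.continuous hL.le hd.le hmono⟩
    subst hs
    obtain ⟨c, hcs, hcmax⟩ := Finset.exists_max_image _ id hne
    obtain ⟨hc, hcd⟩ := Finset.mem_filter.1 hcs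
    have hcgrow : |g c| < g d :=
      (le_mul_of_one_le_left (abs_nonneg _) hL.le).trans_lt (hlast c hc hcd)
    obtain ⟨hmono, hgc⟩ := h.strictMonoOn_and_neg_of_last hc hcd
      (fun c' hc' hcd' => hcmax c' (Finset.mem_filter.2 ⟨hc', hcd'⟩)) hcgrow
    have hsub : {c' ∈ K | c' < c} ⊂ {c' ∈ K | c' < d} := by
      refine Finset.ssubset_iff_of_subset (fun x hx => ?_) |>.2 ⟨c, hcs, by simp⟩
      exact Finset.mem_filter.2 ((Finset.mem_filter.1 hx).imp_right hcd.trans')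
    obtain ⟨⟨m, hm, hLm, habove⟩, hsquare⟩ := ih _ hsub h.neg
      (by simpa [GrowsBy] using hgrow) (h.pos c hc) (neg_pos.2 hgc)
      (fun c' hc' hcc' => by simpa [abs_of_neg hgc] using hgrow c' hc' c hc hcc') rfl
    have hstep : IsGrowthStep g L m c d :=
      ⟨h.odd, h.continuous, hL, (h.pos c hc).le, hcd, hm, hLm, habove, hmono,
        by simpa [abs_of_neg hgc] using hlast c hc hcd⟩
    exact ⟨⟨-g c, neg_nonneg.2 hgc.le, hstep.mul_lt_right, hstep.monotoneAbove⟩,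
      hstep.squareConnected (.of_neg h.odd hsquare)⟩

theorem eventually_squareConnected (h : HasTurningPoints g K) (hgrow : GrowsBy g K L)
    (hL : 1 < L) (hlim : Tendsto (fun x => |g x|) atTop atTop) :
    ∀ᶠ d in atTop, SquareConnected g L d := by
  have hlast : ∀ᶠ d in atTop, ∀ c ∈ K, L * |g c| < |g d| :=
    (eventually_all_finset K).2 fun c _ => hlim.eventually_gt_atTop _
  filter_upwards [hlast, eventually_gt_atTop 0, hlim.eventually_gt_atTop 0]
    with d hlast hd hgd
  rcases lt_or_gt_of_ne (abs_pos.1 hgd) with hneg | hpos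
  · rw [abs_of_neg hneg] at hlast
    exact .of_neg h.odd (h.neg.exists_monotoneAbove_and_squareConnected
      (by simpa [GrowsBy] using hgrow) hL hd (neg_pos.2 hneg)
      fun c hc _ => by simpa using hlast c hc).2
  · rw [abs_of_pos hpos] at hlast
    exact (h.exists_monotoneAbove_and_squareConnected hgrow hL hd hpos fun c hc _ => hlast c hc).2

theorem isConnected_levelCurve (h : HasTurningPoints g K) (hgrow : GrowsBy g K L)
    (hL : 1 < L) (hlim : Tendsto (fun x => |g x|) atTop atTop) :
    IsConnected (levelCurve g L) := by
  obtain ⟨M, hM⟩ := eventually_atTop.1 (h.eventually_squareConnected hgrow hL hlim)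
  exact ⟨⟨0, by simp [levelCurve, h.odd.map_zero]⟩,
    isPreconnected_of_squares fun d hd => (hM d hd).1⟩

theorem isConnected_levelAbove (h : HasTurningPoints g K) (hgrow : GrowsBy g K L)
    (hL : 1 < L) (hlim : Tendsto (fun x => |g x|) atTop atTop) :
    IsConnected (levelAbove g L) := by
  obtain ⟨M, hM⟩ := eventually_atTop.1 (h.eventually_squareConnected hgrow hL hlim)
  refine ⟨?_, isPreconnected_of_squares fun d hd => (hM d hd).2⟩
  obtain ⟨d, hd⟩ := (hlim.eventually_gt_atTop 0).exists
  rcases lt_or_gt_of_ne (abs_pos.1 hd) with hneg | hpos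
  · exact ⟨(0, -d), by simpa [levelAbove, h.odd _, h.odd.map_zero] using hneg⟩
  · exact ⟨(0, d), by simpa [levelAbove, h.odd.map_zero] using hpos⟩

end HasTurningPoints

/-! ### Signs and critical zeros of separated sums -/

/-- The zero, positive and negative sets of `u` are all connected. -/
structure HasConnectedSigns {X : Type*} [TopologicalSpace X] (u : X → ℝ) : Prop where
  isConnected_zero : IsConnected {p | u p = 0}
  isConnected_pos : IsConnected {p | 0 < u p}
  isConnected_neg : IsConnected {p | u p < 0}

namespace HasConnectedSigns

variable {X Y : Type*} [TopologicalSpace X] [TopologicalSpace Y] {u v : X → ℝ}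

theorem comp_homeomorph (h : HasConnectedSigns u) (e : Y ≃ₜ X) : HasConnectedSigns (u ∘ e) where
  isConnected_zero := e.isConnected_preimage.2 h.isConnected_zero
  isConnected_pos := e.isConnected_preimage.2 h.isConnected_pos
  isConnected_neg := e.isConnected_preimage.2 h.isConnected_neg

theorem mul_of_pos (h : HasConnectedSigns u) (hv : ∀ p, 0 < v p) : HasConnectedSigns (u * v) where
  isConnected_zero := by simpa [(hv _).ne'] using h.isConnected_zero
  isConnected_pos := by simpa [hv] using h.isConnected_pos
  isConnected_neg := by simpa [mul_neg_iff, hv, (hv _).not_gt] using h.isConnected_neg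

protected theorem neg (h : HasConnectedSigns u) : HasConnectedSigns (-u) where
  isConnected_zero := by simpa using h.isConnected_zero
  isConnected_pos := by simpa using h.isConnected_neg
  isConnected_neg := by simpa using h.isConnected_pos

theorem const_mul (h : HasConnectedSigns u) {k : ℝ} (hk : k ≠ 0) :
    HasConnectedSigns fun p => k * u p := by
  rcases hk.lt_or_gt with hneg | hpos
  · convert (h.mul_of_pos (v := fun _ => -k) fun _ => neg_pos.2 hneg).neg using 1
    ext p
    simp [mul_comm]
  · convert h.mul_of_pos (v := fun _ => k) fun _ => hpos using 1
    ext p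
    simp [mul_comm]

end HasConnectedSigns

theorem connectedComponentIn_union_eq_left {X : Type*} [TopologicalSpace X] {A B : Set X} {p : X}
    (hA : IsOpen A) (hB : IsOpen B) (hAB : Disjoint A B) (hconn : IsPreconnected A) (hp : p ∈ A) :
    connectedComponentIn (A ∪ B) p = A := by
  refine Subset.antisymm ?_ (hconn.subset_connectedComponentIn hp subset_union_left)
  exact isPreconnected_connectedComponentIn.subset_left_of_subset_union hA hB hAB
    (connectedComponentIn_subset _ _) ⟨p, mem_connectedComponentIn (Or.inl hp), hp⟩

theorem HasConnectedSigns.ncard_nodalDomains {u : ℝ × ℝ → ℝ} (h : HasConnectedSigns u)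
    (hu : Continuous u) : (nodalDomains u).ncard = 2 := by
  have hposOpen : IsOpen {p | 0 < u p} := isOpen_lt continuous_const hu
  have hnegOpen : IsOpen {p | u p < 0} := isOpen_lt hu continuous_const
  have hdisj : Disjoint {p | u p < 0} {p | 0 < u p} :=
    disjoint_left.2 fun p (hp : u p < 0) => hp.not_gt
  have hunion : {p | u p ≠ 0} = {p | u p < 0} ∪ {p | 0 < u p} := by
    ext p
    exact lt_or_lt_iff_ne.symm
  have hnegComp : ∀ p, u p < 0 → connectedComponentIn {q | u q ≠ 0} p = {q | u q < 0} :=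
    fun p hp => hunion ▸
      connectedComponentIn_union_eq_left hnegOpen hposOpen hdisj h.isConnected_neg.isPreconnected hp
  have hposComp : ∀ p, 0 < u p → connectedComponentIn {q | u q ≠ 0} p = {q | 0 < u q} :=
    fun p hp => hunion ▸ union_comm {p | 0 < u p} _ ▸
      connectedComponentIn_union_eq_left hposOpen hnegOpen hdisj.symm
        h.isConnected_pos.isPreconnected hp
  have hpair : nodalDomains u = {{p | u p < 0}, {p | 0 < u p}} := by
    ext C
    constructor
    · rintro ⟨p, hp, rfl⟩
      rcases hp.lt_or_gt with hneg | hpos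
      exacts [Or.inl (hnegComp p hneg), Or.inr (hposComp p hpos)]
    · rintro (rfl | rfl)
      · obtain ⟨p, hp⟩ := h.isConnected_neg.nonempty
        exact ⟨p, ne_of_lt hp, (hnegComp p hp).symm⟩
      · obtain ⟨p, hp⟩ := h.isConnected_pos.nonempty
        exact ⟨p, ne_of_gt hp, (hposComp p hp).symm⟩
  rw [hpair, ncard_pair (hdisj.ne h.isConnected_neg.nonempty.ne_empty)]

/-- The function `a g(x) + b g(y)` on the plane. -/
def separatedSum (g : ℝ → ℝ) (a b : ℝ) (p : ℝ × ℝ) : ℝ := a * g p.1 + b * g p.2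

namespace HasTurningPoints

variable {g : ℝ → ℝ} {K : Finset ℝ} {L a b : ℝ}

theorem hasConnectedSigns_neg_one (h : HasTurningPoints g K) (hgrow : GrowsBy g K L)
    (hL : 1 < L) (hlim : Tendsto (fun x => |g x|) atTop atTop) :
    HasConnectedSigns (separatedSum g (-L) 1) where
  isConnected_zero := by
    convert h.isConnected_levelCurve hgrow hL hlim using 1
    ext p
    simp [separatedSum, levelCurve, neg_add_eq_zero]
  isConnected_pos := by
    convert h.isConnected_levelAbove hgrow hL hlim using 1
    ext p
    simp [separatedSum, levelAbove]
  isConnected_neg := by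
    convert (Homeomorph.neg (ℝ × ℝ)).isConnected_preimage.2
      (h.isConnected_levelAbove hgrow hL hlim) using 1
    ext p
    simp [separatedSum, levelAbove, h.odd _]

theorem hasConnectedSigns_of_abs_lt (h : HasTurningPoints g K) (hgrow : GrowsBy g K (|a| / |b|))
    (hb : b ≠ 0) (hab : |b| < |a|)
    (hlim : Tendsto (fun x => |g x|) atTop atTop) :
    HasConnectedSigns (separatedSum g a b) := by
  have hL : 1 < |a| / |b| := (one_lt_div (abs_pos.2 hb)).2 hab
  have hneg := (h.hasConnectedSigns_neg_one hgrow hL hlim).const_mul hb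
  rcases abs_choice (a / b) with hsign | hsign <;> rw [abs_div] at hsign
  · convert hneg.comp_homeomorph ((Homeomorph.neg ℝ).prodCongr (Homeomorph.refl ℝ)) using 1
    ext p
    simp [separatedSum, hsign, h.odd _, mul_add, ← mul_assoc, mul_div_cancel₀ _ hb]
  · convert hneg using 1
    ext p
    simp [separatedSum, hsign, mul_add, ← mul_assoc, mul_div_cancel₀ _ hb]

theorem hasConnectedSigns (h : HasTurningPoints g K) (ha : a ≠ 0) (hb : b ≠ 0) (hab : |a| ≠ |b|)
    (hgrow : GrowsBy g K (|a| / |b|)) (hgrow' : GrowsBy g K (|b| / |a|))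
    (hlim : Tendsto (fun x => |g x|) atTop atTop) :
    HasConnectedSigns (separatedSum g a b) := by
  rcases hab.lt_or_gt with hlt | hgt
  · convert (h.hasConnectedSigns_of_abs_lt hgrow' ha hlt hlim).comp_homeomorph
      (Homeomorph.prodComm ℝ ℝ) using 1
    ext p
    simp [separatedSum, add_comm]
  · exact h.hasConnectedSigns_of_abs_lt hgrow hb hgt hlim

end HasTurningPoints

theorem IsCriticalZero.of_mul {u v : ℝ × ℝ → ℝ} {p : ℝ × ℝ} (h : IsCriticalZero (u * v) p)
    (hu : DifferentiableAt ℝ u p) (hv : DifferentiableAt ℝ v p) (hvp : v p ≠ 0) :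
    IsCriticalZero u p := by
  have hup : u p = 0 := (mul_eq_zero.1 h.1).resolve_right hvp
  have hderiv := h.2
  rw [fderiv_mul hu hv, hup, zero_smul, zero_add] at hderiv
  exact ⟨hup, (smul_eq_zero.1 hderiv).resolve_left hvp⟩

theorem IsCriticalZero.deriv_eq_zero_of_separatedSum {g : ℝ → ℝ} {a b : ℝ} {p : ℝ × ℝ}
    (h : IsCriticalZero (separatedSum g a b) p) (hg : Differentiable ℝ g) (ha : a ≠ 0)
    (hb : b ≠ 0) : deriv g p.1 = 0 ∧ deriv g p.2 = 0 := by
  have hdiff : DifferentiableAt ℝ (separatedSum g a b) p := by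
    unfold separatedSum
    fun_prop
  have hzero : HasFDerivAt (separatedSum g a b) (0 : ℝ × ℝ →L[ℝ] ℝ) p := h.2 ▸ hdiff.hasFDerivAt
  have hx : HasDerivAt (fun x => separatedSum g a b (x, p.2)) (a * deriv g p.1) p.1 :=
    ((hg p.1).hasDerivAt.const_mul a).add_const (b * g p.2)
  have hy : HasDerivAt (fun y => separatedSum g a b (p.1, y)) (b * deriv g p.2) p.2 :=
    ((hg p.2).hasDerivAt.const_mul b).const_add (a * g p.1)
  have hx' := hzero.comp_hasDerivAt p.1 ((hasDerivAt_id p.1).prodMk (hasDerivAt_const p.1 p.2))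
  have hy' := hzero.comp_hasDerivAt p.2 ((hasDerivAt_const p.2 p.1).prodMk (hasDerivAt_id p.2))
  exact ⟨(mul_eq_zero.1 (hx.unique hx')).resolve_left ha,
    (mul_eq_zero.1 (hy.unique hy')).resolve_left hb⟩

theorem HasTurningPoints.not_isCriticalZero_separatedSum {g : ℝ → ℝ} {K : Finset ℝ} {a b : ℝ}
    (h : HasTurningPoints g K) (hg : Differentiable ℝ g) (hcrit : ∀ x, deriv g x = 0 → |x| ∈ K)
    (ha : a ≠ 0) (hb : b ≠ 0) (hab : |a| ≠ |b|)
    (hgrow : GrowsBy g K (|a| / |b|)) (hgrow' : GrowsBy g K (|b| / |a|)) (p : ℝ × ℝ) :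
    ¬ IsCriticalZero (separatedSum g a b) p := by
  intro hp
  obtain ⟨hx, hy⟩ := hp.deriv_eq_zero_of_separatedSum hg ha hb
  have habs : ∀ x, |g (|x|)| = |g x| := fun x => by
    rcases abs_choice x with hx | hx <;> simp [hx, h.odd _]
  have heq : |a| * |g (|p.1|)| = |b| * |g (|p.2|)| := by
    rw [habs, habs, ← abs_mul, ← abs_mul, abs_eq_abs]
    exact Or.inr (eq_neg_of_add_eq_zero_left hp.1)
  rcases lt_trichotomy |p.1| |p.2| with hlt | hxy | hgt
  · have := hgrow _ (hcrit _ hx) _ (hcrit _ hy) hlt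
    rw [div_mul_eq_mul_div, div_lt_iff₀' (abs_pos.2 hb)] at this
    exact this.ne heq
  · have hne : g |p.2| ≠ 0 := (h.extremum _ (hcrit _ hy)).elim (fun hmax => hmax.1.ne')
      fun hmin => hmin.1.ne
    rw [hxy] at heq
    exact hab (mul_right_cancel₀ (abs_ne_zero.2 hne) heq)
  · have := hgrow' _ (hcrit _ hy) _ (hcrit _ hx) hgt
    rw [div_mul_eq_mul_div, div_lt_iff₀' (abs_pos.2 ha)] at this
    exact this.ne' heq

/-! ### Odd solutions of the Hermite equation -/

/-- `p` is an odd polynomial solution, with `p'(0) ≠ 0`, of the Hermite equation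
`p'' = 2 x p' - 2 k p` of positive degree `k`. -/
structure IsOddHermiteSolution (p : ℝ[X]) (k : ℝ) : Prop where
  odd : Function.Odd fun x => p.eval x
  pos : 0 < k
  ode : derivative (derivative p) = C 2 * X * derivative p - C (2 * k) * p
  derivative_zero_ne : (derivative p).eval 0 ≠ 0

/-- The energy `2 k p² + p'²`, whose derivative along the Hermite equation is `4 x p'²`. -/
noncomputable def hermiteEnergy (p : ℝ[X]) (k : ℝ) : ℝ[X] := C (2 * k) * p ^ 2 + derivative p ^ 2

/-- The zeros of `p'` in `(0, ∞)`, provided that `p` is not constant. -/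
noncomputable def positiveCriticalPoints (p : ℝ[X]) : Finset ℝ :=
  {x ∈ (derivative p).roots.toFinset | 0 < x}

theorem strictMonoOn_eval_of_derivative_nonneg {q : ℝ[X]} {s : Set ℝ} (hs : Convex ℝ s)
    (hq : derivative q ≠ 0) (hnonneg : ∀ x ∈ interior s, 0 ≤ (derivative q).eval x) :
    StrictMonoOn (fun x => q.eval x) s := by
  have hmono : MonotoneOn (fun x => q.eval x) s :=
    monotoneOn_of_deriv_nonneg hs (by fun_prop) (by fun_prop) fun x hx => by
      rw [Polynomial.deriv]
      exact hnonneg x hx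
  intro a ha b hb hab
  refine (hmono ha hb hab.le).lt_of_ne fun heq => hq ?_
  have hconst : q = C (q.eval a) := by
    refine Polynomial.eq_of_infinite_eval_eq _ _ ((Icc_infinite hab).mono fun x hx => ?_)
    have hxs : x ∈ s := hs.ordConnected.out ha hb hx
    rw [mem_ofPred_eq, eval_C]
    exact le_antisymm ((hmono hxs hb hx.2).trans_eq heq.symm) (hmono ha hxs hx.1)
  rw [hconst, derivative_C]

theorem derivative_eval_neg_of_odd {p : ℝ[X]} (h : Function.Odd fun x => p.eval x) (x : ℝ) :
    (derivative p).eval (-x) = (derivative p).eval x := by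
  have hcomp : p.comp (-X) = -p := Polynomial.funext fun x => by simpa using h x
  simpa [derivative_comp] using congrArg (fun q => (derivative q).eval x) hcomp

theorem strictMonoOn_or_strictAntiOn_of_derivative_ne_zero {p : ℝ[X]} {a b : ℝ}
    (h : ∀ x ∈ Ioo a b, (derivative p).eval x ≠ 0) :
    StrictMonoOn (fun x => p.eval x) (Icc a b) ∨ StrictAntiOn (fun x => p.eval x) (Icc a b) := by
  have hsign := hasDerivWithinAt_forall_lt_or_forall_gt_of_forall_ne (convex_Ioo a b)
    (fun x _ => (p.hasDerivAt x).hasDerivWithinAt) h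
  refine hsign.symm.imp (fun hpos => ?_) fun hneg => ?_
  · refine strictMonoOn_of_deriv_pos (convex_Icc a b) (by fun_prop) fun x hx => ?_
    rw [Polynomial.deriv]
    exact hpos x (interior_Icc (a := a) ▸ hx)
  · refine strictAntiOn_of_deriv_neg (convex_Icc a b) (by fun_prop) fun x hx => ?_
    rw [Polynomial.deriv]
    exact hneg x (interior_Icc (a := a) ▸ hx)

theorem eventually_growsBy {g : ℝ → ℝ} {K : Finset ℝ}
    (h : ∀ c ∈ K, ∀ c' ∈ K, c < c' → |g c| < |g c'|) : ∀ᶠ L in 𝓝 1, GrowsBy g K L := by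
  refine (eventually_all_finset K).2 fun c hc =>
    (eventually_all_finset K).2 fun c' hc' => ?_
  refine eventually_imp_distrib_left.2 fun hcc' => ?_
  have hlim : Tendsto (fun L => L * |g c|) (𝓝 1) (𝓝 |g c|) :=
    (continuous_mul_const _).tendsto' 1 _ (one_mul _)
  exact hlim.eventually_lt_const (h c hc c' hc' hcc')

namespace IsOddHermiteSolution

variable {p : ℝ[X]} {k : ℝ} (h : IsOddHermiteSolution p k)
include h

theorem derivative_ne_zero : derivative p ≠ 0 := fun hp =>
  h.derivative_zero_ne (by rw [hp, eval_zero])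

theorem mem_positiveCriticalPoints {x : ℝ} :
    x ∈ positiveCriticalPoints p ↔ 0 < x ∧ (derivative p).eval x = 0 := by
  simp [positiveCriticalPoints, h.derivative_ne_zero, and_comm]

theorem abs_mem_positiveCriticalPoints {x : ℝ} (hx : deriv (fun x => p.eval x) x = 0) :
    |x| ∈ positiveCriticalPoints p := by
  rw [Polynomial.deriv] at hx
  refine h.mem_positiveCriticalPoints.2 ⟨abs_pos.2 ?_, ?_⟩
  · rintro rfl
    exact h.derivative_zero_ne hx
  · rcases abs_choice x with hx' | hx' <;> simpa [hx', derivative_eval_neg_of_odd h.odd] using hx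

theorem derivative_hermiteEnergy :
    derivative (hermiteEnergy p k) = C 4 * X * derivative p ^ 2 := by
  have hchain : derivative (hermiteEnergy p k) = C (2 * k) * (2 * p * derivative p) +
      2 * derivative p * derivative (derivative p) := by
    simp [hermiteEnergy, derivative_pow, map_ofNat]
  rw [hchain, h.ode]
  simp only [C_mul, map_ofNat]
  ring

theorem strictMonoOn_hermiteEnergy :
    StrictMonoOn (fun x => (hermiteEnergy p k).eval x) (Ici 0) := by
  refine strictMonoOn_eval_of_derivative_nonneg (convex_Ici 0) ?_ fun x hx => ?_
  · rw [h.derivative_hermiteEnergy]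
    exact mul_ne_zero (mul_ne_zero (C_ne_zero.2 four_ne_zero) X_ne_zero)
      (pow_ne_zero 2 h.derivative_ne_zero)
  · rw [interior_Ici, mem_Ioi] at hx
    simp only [h.derivative_hermiteEnergy, eval_mul, eval_C, eval_X, eval_pow]
    positivity

theorem abs_eval_lt_of_critical {x c : ℝ} (hx : 0 ≤ x) (hxc : x < c)
    (hc : (derivative p).eval c = 0) : |p.eval x| < |p.eval c| := by
  have henergy := h.strictMonoOn_hermiteEnergy hx (hx.trans hxc.le) hxc
  simp only [hermiteEnergy, eval_add, eval_mul, eval_C, eval_pow, hc] at henergy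
  refine sq_lt_sq.1 (lt_of_mul_lt_mul_left ?_ (mul_pos two_pos h.pos).le)
  nlinarith [sq_nonneg ((derivative p).eval x)]

theorem isLocalExtr_of_critical {c : ℝ} (hc : 0 < c) (hpc : (derivative p).eval c = 0) :
    0 < p.eval c ∧ IsLocalMax (fun x => p.eval x) c ∨
      p.eval c < 0 ∧ IsLocalMin (fun x => p.eval x) c := by
  have hderiv : deriv (fun x => p.eval x) = fun x => (derivative p).eval x :=
    funext fun x => p.deriv
  have hsecond : deriv (deriv fun x => p.eval x) c = -(2 * k) * p.eval c := by
    simp [hderiv, h.ode, hpc]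
  have hfirst : deriv (fun x => p.eval x) c = 0 := by simpa [hderiv] using hpc
  have hk := h.pos
  have hne : p.eval c ≠ 0 :=
    abs_pos.1 ((abs_nonneg _).trans_lt (h.abs_eval_lt_of_critical le_rfl hc hpc))
  rcases hne.lt_or_gt with hneg | hpos
  · refine Or.inr ⟨hneg, isLocalMin_of_deriv_deriv_pos ?_ hfirst p.continuousAt⟩
    rw [hsecond]
    nlinarith
  · refine Or.inl ⟨hpos, isLocalMax_of_deriv_deriv_neg ?_ hfirst p.continuousAt⟩
    rw [hsecond]
    nlinarith

theorem hasTurningPoints : HasTurningPoints (fun x => p.eval x) (positiveCriticalPoints p) where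
  odd := h.odd
  continuous := p.continuous
  pos _ hc := (h.mem_positiveCriticalPoints.1 hc).1
  strict a b ha hK := strictMonoOn_or_strictAntiOn_of_derivative_ne_zero fun x hx hpx =>
    hK x (h.mem_positiveCriticalPoints.2 ⟨ha.trans_lt hx.1, hpx⟩) hx
  extremum c hc := by
    obtain ⟨hc₀, hpc⟩ := h.mem_positiveCriticalPoints.1 hc
    exact h.isLocalExtr_of_critical hc₀ hpc

theorem eventually_growsBy_positiveCriticalPoints :
    ∀ᶠ L in 𝓝 1, GrowsBy (fun x => p.eval x) (positiveCriticalPoints p) L :=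
  eventually_growsBy fun _ hc _ hc' hcc' => h.abs_eval_lt_of_critical
    (h.mem_positiveCriticalPoints.1 hc).1.le hcc' (h.mem_positiveCriticalPoints.1 hc').2

theorem tendsto_abs_eval : Tendsto (fun x => |p.eval x|) atTop atTop := by
  refine p.abs_tendsto_atTop (not_le.1 fun hdeg => h.derivative_ne_zero ?_)
  rw [eq_C_of_degree_le_zero hdeg, derivative_C]

end IsOddHermiteSolution

/-! ### Hermite polynomials -/

theorem hermiteH_eval_neg (n : ℕ) (x : ℝ) :
    (hermiteH n).eval (-x) = (-1) ^ n * (hermiteH n).eval x := by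
  induction n using Nat.twoStepInduction with
  | zero => simp [hermiteH]
  | one => simp [hermiteH]
  | more n ih1 ih2 =>
    simp only [hermiteH, eval_sub, eval_mul, eval_C, eval_X, ih1, ih2]
    ring

theorem derivative_hermiteH_succ (n : ℕ) :
    derivative (hermiteH (n + 1)) = C (2 * (n + 1 : ℝ)) * hermiteH n := by
  induction n using Nat.twoStepInduction with
  | zero => simp [hermiteH]
  | one =>
    simp only [hermiteH, derivative_sub, derivative_mul, derivative_X, derivative_C,
      derivative_one]
    simp only [C_mul, C_add, map_ofNat, map_one, map_natCast]
    push_cast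
    ring
  | more n ih1 ih2 =>
    rw [hermiteH]
    simp only [derivative_sub, derivative_mul, derivative_C, derivative_X, ih1, ih2]
    rw [hermiteH]
    simp only [C_mul, C_add, map_natCast, map_ofNat, map_one]
    push_cast
    ring

theorem hermiteH_ode (n : ℕ) : derivative (derivative (hermiteH (n + 1))) =
    C 2 * X * derivative (hermiteH (n + 1)) - C (2 * (n + 1 : ℝ)) * hermiteH (n + 1) := by
  cases n with
  | zero =>
    simp only [hermiteH, derivative_mul, derivative_X, derivative_C, zero_mul, mul_one,
      zero_add, Nat.cast_zero]
    ring
  | succ n =>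
    rw [derivative_hermiteH_succ, derivative_mul, derivative_C, derivative_hermiteH_succ, hermiteH]
    simp only [C_mul, C_add, map_natCast, map_ofNat, map_one]
    push_cast
    ring

theorem hermiteH_eval_zero_ne_zero (m : ℕ) : (hermiteH (2 * m)).eval 0 ≠ 0 := by
  induction m with
  | zero => simp [hermiteH]
  | succ m ih =>
    rw [show 2 * (m + 1) = 2 * m + 2 by ring, hermiteH]
    simp only [eval_sub, eval_mul, eval_C, eval_X, mul_zero, zero_mul, zero_sub]
    exact neg_ne_zero.mpr (mul_ne_zero (by positivity) ih)

theorem isOddHermiteSolution_hermiteH {n : ℕ} (hodd : Odd n) :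
    IsOddHermiteSolution (hermiteH n) n := by
  obtain ⟨m, rfl⟩ := hodd
  refine ⟨fun x => ?_, by positivity, ?_, ?_⟩
  · simp only [hermiteH_eval_neg, Odd.neg_one_pow ⟨m, rfl⟩, neg_one_mul]
  · rw [hermiteH_ode]
    push_cast
    rfl
  · rw [derivative_hermiteH_succ]
    simp only [eval_mul, eval_C]
    exact mul_ne_zero (by positivity) (hermiteH_eval_zero_ne_zero m)

theorem abs_cos_eq_abs_sin_iff {θ : ℝ} : |cos θ| = |sin θ| ↔ cos (2 * θ) = 0 := by
  rw [← sq_eq_sq_iff_abs_eq_abs, cos_two_mul', sub_eq_zero]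

theorem Phi_nodal_of_growsBy {n : ℕ} {θ : ℝ} (hodd : Odd n) (hcos : cos θ ≠ 0) (hsin : sin θ ≠ 0)
    (hne : |cos θ| ≠ |sin θ|)
    (hgrow : GrowsBy (fun x => (hermiteH n).eval x) (positiveCriticalPoints (hermiteH n))
      (|cos θ| / |sin θ|))
    (hgrow' : GrowsBy (fun x => (hermiteH n).eval x) (positiveCriticalPoints (hermiteH n))
      (|sin θ| / |cos θ|)) :
    (∀ p, ¬ IsCriticalZero (Phi n θ) p) ∧ IsConnected (nodalSet (Phi n θ)) ∧
      (nodalDomains (Phi n θ)).ncard = 2 := by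
  have hH := isOddHermiteSolution_hermiteH hodd
  have hPhi : Phi n θ = separatedSum (fun x => (hermiteH n).eval x) (cos θ) (sin θ) *
      fun p => exp (-(p.1 ^ 2 + p.2 ^ 2) / 2) := rfl
  have hsigns : HasConnectedSigns (Phi n θ) :=
    (hH.hasTurningPoints.hasConnectedSigns hcos hsin hne hgrow hgrow'
      hH.tendsto_abs_eval).mul_of_pos fun _ => exp_pos _
  refine ⟨fun p hp => ?_, hsigns.isConnected_zero, hsigns.ncard_nodalDomains ?_⟩
  · rw [hPhi] at hp
    refine hH.hasTurningPoints.not_isCriticalZero_separatedSum (hermiteH n).differentiable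
      (fun _ => hH.abs_mem_positiveCriticalPoints) hcos hsin hne hgrow hgrow' p
      (hp.of_mul ?_ ?_ (exp_pos _).ne')
    · unfold separatedSum
      fun_prop
    · fun_prop
  · unfold Phi
    fun_prop

theorem eventually_Phi_nodal {n : ℕ} {α : ℝ} (hodd : Odd n) (hα : cos (2 * α) = 0) :
    ∀ᶠ θ in 𝓝[≠] α, (∀ p, ¬ IsCriticalZero (Phi n θ) p) ∧ IsConnected (nodalSet (Phi n θ)) ∧
      (nodalDomains (Phi n θ)).ncard = 2 := by
  have habs : |cos α| = |sin α| := abs_cos_eq_abs_sin_iff.2 hα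
  have hcos : cos α ≠ 0 := fun hc => by
    have hs : sin α = 0 := by rwa [hc, abs_zero, eq_comm, abs_eq_zero] at habs
    simpa [hc, hs] using sin_sq_add_cos_sq α
  have hsin : sin α ≠ 0 := abs_ne_zero.1 (habs ▸ abs_ne_zero.2 hcos)
  have hratio : Tendsto (fun θ => |cos θ| / |sin θ|) (𝓝 α) (𝓝 1) := by
    rw [← div_self (abs_ne_zero.2 hsin)]
    nth_rewrite 1 [← habs]
    exact (continuous_cos.abs.tendsto α).div (continuous_sin.abs.tendsto α) (abs_ne_zero.2 hsin)
  have hratio' : Tendsto (fun θ => |sin θ| / |cos θ|) (𝓝 α) (𝓝 1) := by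
    simpa using hratio.inv₀ one_ne_zero
  have hderiv : HasDerivAt (fun θ => cos (2 * θ)) (-sin (2 * α) * (2 * 1)) α :=
    ((hasDerivAt_id α).const_mul 2).cos
  have hderiv_ne : -sin (2 * α) * (2 * 1) ≠ 0 := by
    rw [sin_two_mul]
    simp [hcos, hsin]
  have hgrow := (isOddHermiteSolution_hermiteH hodd).eventually_growsBy_positiveCriticalPoints
  filter_upwards [hderiv.eventually_ne hderiv_ne, (hratio.eventually hgrow).filter_mono
    nhdsWithin_le_nhds, (hratio'.eventually hgrow).filter_mono nhdsWithin_le_nhds,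
    (continuous_cos.continuousAt.eventually_ne hcos).filter_mono nhdsWithin_le_nhds,
    (continuous_sin.continuousAt.eventually_ne hsin).filter_mono nhdsWithin_le_nhds]
    with θ hne hgrowθ hgrowθ' hcosθ hsinθ
  exact Phi_nodal_of_growsBy hodd hcosθ hsinθ (fun heq => hne (abs_cos_eq_abs_sin_iff.1 heq))
    hgrowθ hgrowθ'

theorem exists_Ioo_of_eventually_nhdsNE {P : ℝ → Prop} {α : ℝ} (h : ∀ᶠ θ in 𝓝[≠] α, P θ) :
    ∃ a b, a < α ∧ α < b ∧ ∀ θ ∈ Ioo a b, θ ≠ α → P θ := by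
  obtain ⟨a, b, hα, hab⟩ := mem_nhds_iff_exists_Ioo_subset.1 (eventually_nhdsWithin_iff.1 h)
  exact ⟨a, b, hα.1, hα.2, fun θ hθ => hab hθ⟩

/-- For odd `n`, there are open intervals around `π/4` and `3π/4`
such that for every `θ` in their union, except `π/4` and `3π/4` themselves,
`Φ_n^θ` has no critical zero, its nodal set is connected, and it has exactly
two nodal domains. -/
theorem stern_intervals_two_nodal_domains (n : ℕ) (hodd : Odd n) (hpos : 0 < n) :
    ∃ a₁ b₁ a₂ b₂ : ℝ, a₁ < π / 4 ∧ π / 4 < b₁ ∧ a₂ < 3 * π / 4 ∧ 3 * π / 4 < b₂ ∧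
      ∀ θ ∈ (Set.Ioo a₁ b₁ ∪ Set.Ioo a₂ b₂) \ {π / 4, 3 * π / 4},
        (∀ p : ℝ × ℝ, ¬ IsCriticalZero (Phi n θ) p) ∧
        IsConnected (nodalSet (Phi n θ)) ∧
        (nodalDomains (Phi n θ)).ncard = 2 := by
  have hα₁ : cos (2 * (π / 4)) = 0 := by rw [← cos_pi_div_two]; ring_nf
  have hα₂ : cos (2 * (3 * π / 4)) = 0 := by
    rw [show 2 * (3 * π / 4) = π / 2 + π by ring, cos_add_pi, cos_pi_div_two, neg_zero]
  obtain ⟨a₁, b₁, ha₁, hb₁, h₁⟩ :=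
    exists_Ioo_of_eventually_nhdsNE (eventually_Phi_nodal hodd hα₁)
  obtain ⟨a₂, b₂, ha₂, hb₂, h₂⟩ :=
    exists_Ioo_of_eventually_nhdsNE (eventually_Phi_nodal hodd hα₂)
  refine ⟨a₁, b₁, a₂, b₂, ha₁, hb₁, ha₂, hb₂, ?_⟩
  rintro θ ⟨hθ₁ | hθ₂, hθ⟩
  · exact h₁ θ hθ₁ fun h => hθ (Or.inl h)
  · exact h₂ θ hθ₂ fun h => hθ (Or.inr h)
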